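/- If a graph G has a perfect matching, then for every positive integer k, G has a subgraph that is simultaneously spanning and a maximum k-edge-colorable subgraph of G. -/

import Mathlib

/-!
Fix a perfect matching `M`. Among the maximum `k`-edge-colorable subgraphs choose one, `H`, that
shares as many edges as possible with `M`. If some vertex `v` were isolated in `H`, let `v u` be
its edge in `M` and fix a color `i` (this uses `k > 0`). Delete from `H` the edge of color `i` at
`u`, if there is one, and add `v u` with color `i`. The result is properly colored and has at least
as many edges, hence is again maximum; the deleted edge is not in `M`, because `v u` is the only
edge of `M` at `u`, so the new subgraph has one more edge in common with `M`: a contradiction.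

The exchange is carried out on edge sets (`exists_exchange`), and transferred to subgraphs through
`edgeColorable_iff`.
-/

open SimpleGraph

variable {V : Type*}

/-- A subgraph is spanning if every vertex of the host graph has a neighbor in it. -/
def SpanningSub {G : SimpleGraph V} (H : G.Subgraph) : Prop :=
  ∀ v : V, ∃ w : V, H.Adj v w

/-- A subgraph is `k`-edge-colorable if its edges can be properly colored with `k` colors,
i.e. its edge set can be partitioned into `k` matchings. -/
def EdgeColorable {G : SimpleGraph V} (H : G.Subgraph) (k : ℕ) : Prop :=
  ∃ f : H.edgeSet → Fin k, ∀ e₁ e₂ : H.edgeSet, e₁ ≠ e₂ →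
    (∃ v : V, v ∈ (e₁ : Sym2 V) ∧ v ∈ (e₂ : Sym2 V)) → f e₁ ≠ f e₂

/-- A maximum `k`-edge-colorable subgraph: `k`-edge-colorable with as many edges as possible. -/
def MaximumEdgeColorable {G : SimpleGraph V} (H : G.Subgraph) (k : ℕ) : Prop :=
  EdgeColorable H k ∧
    ∀ H' : G.Subgraph, EdgeColorable H' k → H'.edgeSet.ncard ≤ H.edgeSet.ncard

/-- `sp G`: the least `k` such that `G` has a spanning `k`-edge-colorable subgraph. -/
noncomputable def sp (G : SimpleGraph V) : ℕ :=
  sInf {k | ∃ H : G.Subgraph, SpanningSub H ∧ EdgeColorable H k}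

/-- Maximum degree. -/
noncomputable def maxDeg (G : SimpleGraph V) : ℕ :=
  sSup (Set.range fun v : V => (G.neighborSet v).ncard)

/-- Minimum degree. -/
noncomputable def minDeg (G : SimpleGraph V) : ℕ :=
  sInf (Set.range fun v : V => (G.neighborSet v).ncard)

/-- Matching number. -/
noncomputable def matchNum (G : SimpleGraph V) : ℕ :=
  sSup {n | ∃ M : G.Subgraph, M.IsMatching ∧ M.edgeSet.ncard = n}

/-- The edge set `E` admits a proper coloring with `k` colors. The coloring is a total function on
`Sym2 V`, of which only the values on `E` matter. -/
def ProperlyColorable (E : Set (Sym2 V)) (k : ℕ) : Prop :=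
  ∃ c : Sym2 V → Fin k, ∀ e₁ ∈ E, ∀ e₂ ∈ E, ∀ v, v ∈ e₁ → v ∈ e₂ → c e₁ = c e₂ → e₁ = e₂

lemma edgeColorable_iff {G : SimpleGraph V} (H : G.Subgraph) {k : ℕ} (hk : 0 < k) :
    EdgeColorable H k ↔ ProperlyColorable H.edgeSet k := by
  classical
  constructor
  · rintro ⟨f, hf⟩
    refine ⟨fun e => if h : e ∈ H.edgeSet then f ⟨e, h⟩ else ⟨0, hk⟩, ?_⟩
    intro e₁ h₁ e₂ h₂ v hv₁ hv₂ hc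
    by_contra hne
    simp only [h₁, h₂, dite_true] at hc
    exact hf ⟨e₁, h₁⟩ ⟨e₂, h₂⟩ (fun h => hne (congrArg Subtype.val h)) ⟨v, hv₁, hv₂⟩ hc
  · rintro ⟨c, hc⟩
    refine ⟨fun e => c e, ?_⟩
    rintro ⟨e₁, h₁⟩ ⟨e₂, h₂⟩ hne ⟨v, hv₁, hv₂⟩ h
    exact hne (Subtype.ext (hc e₁ h₁ e₂ h₂ v hv₁ hv₂ h))

/-- The subgraph of `G` on all vertices with edge set `E`. -/
def subgraphOfEdges (G : SimpleGraph V) (E : Set (Sym2 V)) (hE : E ⊆ G.edgeSet) :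
    G.Subgraph where
  verts := Set.univ
  Adj a b := s(a, b) ∈ E
  adj_sub h := hE h
  edge_vert _ := Set.mem_univ _
  symm := ⟨fun a b h => by rwa [Sym2.eq_swap]⟩

lemma edgeSet_subgraphOfEdges (G : SimpleGraph V) (E : Set (Sym2 V)) (hE : E ⊆ G.edgeSet) :
    (subgraphOfEdges G E hE).edgeSet = E := by
  ext e
  induction e with
  | _ a b => exact Iff.rfl

/-- The exchange step: if `v` is isolated in `E` and `s(v, u)` is the only edge of `M` at `u`, then
`s(v, u)` can be inserted in `E` at the expense of at most one edge, lying outside `M`. -/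
lemma exists_exchange [Finite V] {E M : Set (Sym2 V)} {k : ℕ} (hk : 0 < k)
    (hE : ProperlyColorable E k) {u v : V} (hv : ∀ e ∈ E, v ∉ e) (huv : s(v, u) ∈ M)
    (hM : ∀ e ∈ M, u ∈ e → e = s(v, u)) :
    ∃ E' : Set (Sym2 V), E' ⊆ insert s(v, u) E ∧ ProperlyColorable E' k ∧
      E.ncard ≤ E'.ncard ∧ (E ∩ M).ncard < (E' ∩ M).ncard := by
  classical
  obtain ⟨c, hc⟩ := hE
  have hnot : s(v, u) ∉ E := fun h => hv _ h (Sym2.mem_mk_left v u)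
  let i : Fin k := ⟨0, hk⟩
  let R : Set (Sym2 V) := {e | e ∈ E ∧ u ∈ e ∧ c e = i}
  have hR : R.ncard ≤ 1 := by
    rw [Set.ncard_le_one]
    rintro a ⟨ha, hua, hca⟩ b ⟨hb, hub, hcb⟩
    exact hc a ha b hb u hua hub (hca.trans hcb.symm)
  have hnotR : s(v, u) ∉ E \ R := fun h => hnot h.1
  refine ⟨insert s(v, u) (E \ R), Set.insert_subset_insert Set.sdiff_subset, ?_, ?_, ?_⟩
  · refine ⟨Function.update c s(v, u) i, ?_⟩
    -- Any remaining edge that meets `s(v, u)` contains `u`, so it is not colored `i`.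
    have key : ∀ e ∈ E \ R, ∀ w, w ∈ s(v, u) → w ∈ e → c e ≠ i := by
      rintro e ⟨he, heR⟩ w hw hwe hci
      rcases Sym2.mem_iff.1 hw with rfl | rfl
      · exact hv e he hwe
      · exact heR ⟨he, hwe, hci⟩
    have hne : ∀ e ∈ E \ R, e ≠ s(v, u) := fun e he h => hnotR (h ▸ he)
    rintro e₁ (rfl | h₁) e₂ (rfl | h₂) w hw₁ hw₂ h
    · rfl
    · rw [Function.update_self, Function.update_of_ne (hne _ h₂)] at h
      exact absurd h.symm (key _ h₂ w hw₁ hw₂)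
    · rw [Function.update_self, Function.update_of_ne (hne _ h₁)] at h
      exact absurd h (key _ h₁ w hw₂ hw₁)
    · rw [Function.update_of_ne (hne _ h₁), Function.update_of_ne (hne _ h₂)] at h
      exact hc _ h₁.1 _ h₂.1 w hw₁ hw₂ h
  · rw [Set.ncard_insert_of_notMem hnotR]
    have := Set.ncard_le_ncard_sdiff_add_ncard E R
    omega
  · refine Set.ncard_lt_ncard ⟨?_, fun h => hnot (h ⟨Set.mem_insert _ _, huv⟩).1⟩
    rintro e ⟨heE, heM⟩
    exact ⟨Or.inr ⟨heE, fun hr => hnot (hM e heM hr.2.1 ▸ heE)⟩, heM⟩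

/-- If a graph has a perfect matching, then for every positive integer `k` it has a subgraph
that is simultaneously spanning and a maximum `k`-edge-colorable subgraph. -/
theorem perfectMatching_spanning_maximum_k_edge_colorable
    {V : Type*} [Fintype V] (G : SimpleGraph V)
    (hpm : ∃ M : G.Subgraph, M.IsPerfectMatching) (k : ℕ) (hk : 0 < k) :
    ∃ H : G.Subgraph, SpanningSub H ∧ MaximumEdgeColorable H k := by
  obtain ⟨M, hM, hspan⟩ := hpm
  let S : Set (Set (Sym2 V)) := {E | E ⊆ G.edgeSet ∧ ProperlyColorable E k}
  have hS : S.Nonempty := ⟨∅, Set.empty_subset _, fun _ => ⟨0, hk⟩, by simp⟩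
  obtain ⟨E₀, hE₀, hmax₀⟩ := Set.exists_max_image S Set.ncard (Set.toFinite S) hS
  let T : Set (Set (Sym2 V)) := {E | E ∈ S ∧ E₀.ncard ≤ E.ncard}
  obtain ⟨E, ⟨⟨hEG, hEc⟩, hE₀E⟩, hmax⟩ := Set.exists_max_image T
    (fun E => (E ∩ M.edgeSet).ncard) (Set.toFinite T) ⟨E₀, hE₀, le_rfl⟩
  refine ⟨subgraphOfEdges G E hEG, ?_, ?_, ?_⟩
  · intro v
    by_contra hiso
    have hv : ∀ e ∈ E, v ∉ e := by
      rintro e he hve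
      obtain ⟨w, rfl⟩ := hve
      exact hiso ⟨w, he⟩
    obtain ⟨u, hvu, -⟩ := hM (hspan v)
    have huniq : ∀ e ∈ M.edgeSet, u ∈ e → e = s(v, u) := by
      rintro e he hue
      obtain ⟨w, rfl⟩ := hue
      have hw : w = v := (hM (hspan u)).unique he hvu.symm
      rw [hw, Sym2.eq_swap]
    obtain ⟨E', hsub, hcol, hcard, hlt⟩ := exists_exchange hk hEc hv hvu huniq
    have hE' : E' ⊆ G.edgeSet :=
      hsub.trans (Set.insert_subset (M.adj_sub hvu) hEG)
    exact absurd (hmax E' ⟨⟨hE', hcol⟩, hE₀E.trans hcard⟩) (not_le.2 hlt)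
  · rwa [edgeColorable_iff _ hk, edgeSet_subgraphOfEdges]
  · intro H' hH'
    rw [edgeSet_subgraphOfEdges]
    exact (hmax₀ _ ⟨H'.edgeSet_subset, (edgeColorable_iff _ hk).1 hH'⟩).trans hE₀E
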